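/- For every sequence of nonnegative weights γ = (γ_j)_{j≥1} there exists a constant C > 0 (independent of N and s) such that for all s ∈ ℕ with s ≥ 2 and all N ∈ ℕ one has disc_γ(N,s) ≤ C·(√(log s)/√N)·max_{∅ ≠ u ⊆ [s]} γ_u·√|u|, where γ_u = ∏_{j∈u} γ_j and |u| denotes the cardinality of u. -/

import Mathlib

open Finset

/-- Local discrepancy of the point set `x` at the corner point `t`:
`Δ(t) = #{n : x_n ∈ [0,t)}/N − ∏_j t_j`. -/
noncomputable def localDisc {N s : ℕ} (x : Fin N → Fin s → ℝ) (t : Fin s → ℝ) : ℝ :=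
  ((univ.filter fun n => ∀ j, x n j < t j).card : ℝ) / N - ∏ j, t j

/-- `(z_u, 1)`: the vector `z` with all components whose index is not in `u`
replaced by `1`. -/
def projPoint {s : ℕ} (u : Finset (Fin s)) (z : Fin s → ℝ) : Fin s → ℝ :=
  fun j => if j ∈ u then z j else 1

/-- The weight `γ_u = ∏_{j ∈ u} γ_j` of a set of coordinates `u ⊆ {1,…,s}`;
coordinate `j : Fin s` carries weight `γ (j+1)` (weights are indexed from `1`). -/
noncomputable def weightOf {s : ℕ} (γ : ℕ → ℝ) (u : Finset (Fin s)) : ℝ :=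
  ∏ j ∈ u, γ (j.1 + 1)

/-- Weighted star-discrepancy
`D*_γ(x) = sup_{z ∈ [0,1]^s} max_{∅ ≠ u ⊆ [s]} γ_u |Δ(z_u,1)|`. -/
noncomputable def wStarDisc {N s : ℕ} (γ : ℕ → ℝ) (x : Fin N → Fin s → ℝ) : ℝ :=
  sSup {d : ℝ | ∃ z : Fin s → ℝ, (∀ j, z j ∈ Set.Icc (0:ℝ) 1) ∧
    ∃ u : Finset (Fin s), u.Nonempty ∧
      d = weightOf γ u * |localDisc x (projPoint u z)|}

/-- `N`-th minimal weighted star-discrepancy `disc_γ(N,s)`. -/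
noncomputable def wMinDisc (γ : ℕ → ℝ) (N s : ℕ) : ℝ :=
  sInf {d : ℝ | ∃ x : Fin N → Fin s → ℝ,
    (∀ n j, x n j ∈ Set.Ico (0:ℝ) 1) ∧ d = wStarDisc γ x}


lemma aux_prod_sub {ι : Type*} [DecidableEq ι] (S : Finset ι) (A B : ι → ℝ)
    (h0 : ∀ j, 0 ≤ B j) (h1 : ∀ j, B j ≤ A j) (h2 : ∀ j, A j ≤ 1) :
    ∏ j ∈ S, A j - ∏ j ∈ S, B j ≤ ∑ j ∈ S, (A j - B j) := by
  induction S using Finset.induction_on with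
  | empty => simp
  | insert j S hj ih =>
    rw [prod_insert hj, prod_insert hj, sum_insert hj]
    have hB : ∏ j ∈ S, B j ≤ 1 := prod_le_one (fun i _ => h0 i) (fun i _ => (h1 i).trans (h2 i))
    have hB0 : 0 ≤ ∏ j ∈ S, B j := prod_nonneg (fun i _ => h0 i)
    have hAB : ∏ j ∈ S, B j ≤ ∏ j ∈ S, A j := prod_le_prod (fun i _ => h0 i) (fun i _ => h1 i)
    nlinarith [h0 j, h1 j, h2 j, mul_nonneg (sub_nonneg.2 (h1 j)) (sub_nonneg.2 hB),
      mul_nonneg (sub_nonneg.2 (h2 j)) (sub_nonneg.2 hAB)]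

/-- Average of a function on a finite type. -/
noncomputable def auxAvg {α : Type*} [Fintype α] (f : α → ℝ) : ℝ :=
  (∑ a, f a) / (Fintype.card α : ℝ)

lemma aux_mgf {α : Type*} [Fintype α] [Nonempty α] (f : α → ℝ)
    (hf : ∀ a, f a = 0 ∨ f a = 1) (θ : ℝ) (hθ : |θ| ≤ 1) :
    ∑ a, Real.exp (θ * (f a - auxAvg f)) ≤
      (Fintype.card α : ℝ) * Real.exp (auxAvg f * θ ^ 2) := by
  have hc : (0:ℝ) < Fintype.card α := by exact_mod_cast Fintype.card_pos
  set q := auxAvg f with hq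
  have hsum : ∑ a, f a = Fintype.card α * q := by
    rw [hq, auxAvg]; field_simp
  have hq0 : 0 ≤ q := by
    rw [hq, auxAvg]
    refine div_nonneg (sum_nonneg fun a _ => ?_) hc.le
    rcases hf a with h | h <;> simp [h]
  have e1 : ∀ a, Real.exp (θ * (f a - q)) =
      Real.exp (-(θ * q)) * (1 + f a * (Real.exp θ - 1)) := by
    intro a
    rcases hf a with h | h
    · simp [h]
    · rw [h, mul_sub, sub_eq_add_neg, Real.exp_add]; ring_nf
  simp_rw [e1]
  rw [← mul_sum, sum_add_distrib, ← sum_mul, hsum]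
  simp only [sum_const, card_univ, nsmul_eq_mul, mul_one]
  have h3 : 1 + q * (Real.exp θ - 1) ≤ Real.exp (q * (Real.exp θ - 1)) := by
    linarith [Real.add_one_le_exp (q * (Real.exp θ - 1))]
  have h4 : Real.exp θ - 1 - θ ≤ θ ^ 2 := le_trans (le_abs_self _) (Real.abs_exp_sub_one_sub_id_le hθ)
  have h5 : Real.exp (-(θ * q)) * Real.exp (q * (Real.exp θ - 1)) ≤ Real.exp (q * θ ^ 2) := by
    rw [← Real.exp_add]
    apply Real.exp_le_exp.2
    nlinarith
  calc _ = Fintype.card α * (Real.exp (-(θ * q)) * (1 + q * (Real.exp θ - 1))) := by ring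
    _ ≤ Fintype.card α * (Real.exp (-(θ * q)) * Real.exp (q * (Real.exp θ - 1))) := by gcongr
    _ ≤ _ := by gcongr

lemma aux_mgfN {α : Type*} [Fintype α] [Nonempty α] (N : ℕ) (f : α → ℝ)
    (hf : ∀ a, f a = 0 ∨ f a = 1) (θ : ℝ) (hθ : |θ| ≤ 1) :
    ∑ x : Fin N → α, Real.exp (θ * (∑ n, f (x n) - N * auxAvg f)) ≤
      (Fintype.card α : ℝ) ^ N * Real.exp (N * auxAvg f * θ ^ 2) := by
  have e : ∀ x : Fin N → α, Real.exp (θ * (∑ n, f (x n) - N * auxAvg f)) =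
      ∏ n, Real.exp (θ * (f (x n) - auxAvg f)) := by
    intro x
    rw [← Real.exp_sum, ← mul_sum, sum_sub_distrib]; simp
  simp_rw [e]
  rw [← Fintype.sum_pow (fun a => Real.exp (θ * (f a - auxAvg f)))]
  calc _ ≤ ((Fintype.card α : ℝ) * Real.exp (auxAvg f * θ ^ 2)) ^ N := by
        gcongr
        exact aux_mgf f hf θ hθ
    _ = _ := by rw [mul_pow, ← Real.exp_nat_mul]; ring_nf

lemma aux_exists {α ι : Type*} [Fintype α] [Nonempty α] (N : ℕ) (T : Finset ι)
    (f : ι → α → ℝ) (ε θ τ : ι → ℝ)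
    (hf : ∀ k ∈ T, ∀ a, f k a = 0 ∨ f k a = 1)
    (hε : ∀ k ∈ T, auxAvg (f k) ≤ ε k)
    (hθ0 : ∀ k ∈ T, 0 < θ k) (hθ1 : ∀ k ∈ T, θ k ≤ 1)
    (hsum : ∑ k ∈ T, 2 * Real.exp (N * ε k * θ k ^ 2 - θ k * τ k) < 1) :
    ∃ x : Fin N → α, ∀ k ∈ T, |∑ n, f k (x n) - N * auxAvg (f k)| ≤ τ k := by
  classical
  have hc : (0:ℝ) < Fintype.card α := by exact_mod_cast Fintype.card_pos
  let S : ι → (Fin N → α) → ℝ := fun k x => ∑ n, f k (x n) - N * auxAvg (f k)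
  let Φ : (Fin N → α) → ℝ := fun x => ∑ k ∈ T,
    (Real.exp (θ k * S k x) + Real.exp (-θ k * S k x)) * Real.exp (- (θ k * τ k))
  have htot : ∑ x, Φ x < ∑ x : Fin N → α, (1:ℝ) := by
    simp only [Φ]
    rw [sum_comm]
    have : ∀ k ∈ T, ∑ x, (Real.exp (θ k * S k x) + Real.exp (-θ k * S k x)) *
        Real.exp (- (θ k * τ k)) ≤ (Fintype.card α : ℝ) ^ N *
          (2 * Real.exp (N * ε k * θ k ^ 2 - θ k * τ k)) := by
      intro k hk
      rw [← sum_mul, sum_add_distrib]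
      have hle : Real.exp (N * auxAvg (f k) * θ k ^ 2) ≤ Real.exp (N * ε k * θ k ^ 2) := by
        apply Real.exp_le_exp.2
        have := hε k hk
        gcongr
      have a1 := aux_mgfN N (f k) (hf k hk) (θ k) (by rw [abs_of_pos (hθ0 k hk)]; exact hθ1 k hk)
      have a2 := aux_mgfN N (f k) (hf k hk) (-θ k) (by
        rw [abs_neg, abs_of_pos (hθ0 k hk)]; exact hθ1 k hk)
      rw [neg_sq] at a2
      have hpow : (0:ℝ) ≤ (Fintype.card α : ℝ) ^ N := by positivity
      have hle2 := mul_le_mul_of_nonneg_left hle hpow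
      rw [sub_eq_add_neg, Real.exp_add]
      calc _ ≤ ((Fintype.card α : ℝ) ^ N * Real.exp (N * ε k * θ k ^ 2) +
            (Fintype.card α : ℝ) ^ N * Real.exp (N * ε k * θ k ^ 2)) * Real.exp (- (θ k * τ k)) := by
            gcongr
            · exact a1.trans hle2
            · exact a2.trans hle2
        _ = _ := by ring
    calc _ ≤ _ := sum_le_sum this
      _ < _ := by
        rw [← mul_sum]
        have hpow : (0:ℝ) < (Fintype.card α : ℝ) ^ N := by positivity
        have := mul_lt_mul_of_pos_left hsum hpow
        simpa using this
  obtain ⟨x, -, hx⟩ := exists_lt_of_sum_lt htot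
  refine ⟨x, fun k hk => ?_⟩
  have hterm := (single_le_sum (f := fun k => (Real.exp (θ k * S k x) +
    Real.exp (-θ k * S k x)) * Real.exp (- (θ k * τ k))) (fun k _ => by positivity) hk).trans_lt hx
  simp only [add_mul, ← Real.exp_add] at hterm
  have p1 := Real.exp_pos (θ k * S k x + -(θ k * τ k))
  have p2 := Real.exp_pos (-θ k * S k x + -(θ k * τ k))
  have h1 : θ k * S k x + -(θ k * τ k) < 0 := Real.exp_lt_one_iff.1 (by linarith) 
  have h2 : -θ k * S k x + -(θ k * τ k) < 0 := Real.exp_lt_one_iff.1 (by linarith)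
  have h0 := hθ0 k hk
  change |S k x| ≤ τ k
  rw [abs_le]
  constructor <;> nlinarith

/-- indicator of a grid box at level `i` -/
noncomputable def auxInd (s K i : ℕ) (c : Fin s → ℕ) (y : Fin s → Fin (s * 8 ^ K)) : ℝ :=
  if ∀ j, (y j : ℕ) < c j * 8 ^ (K - i) then 1 else 0

/-- chaining increment at level `i` -/
noncomputable def auxF (s K : ℕ) : ℕ → (Fin s → ℕ) → (Fin s → Fin (s * 8 ^ K)) → ℝ
  | 0, c => auxInd s K 0 c
  | (i+1), c => fun y => auxInd s K (i+1) c y - auxInd s K i (fun j => c j / 8) y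

lemma aux_step_le (K i c : ℕ) (h : i + 1 ≤ K) : c / 8 * 8 ^ (K - i) ≤ c * 8 ^ (K - (i+1)) := by
  have : K - i = (K - (i+1)) + 1 := by omega
  rw [this, pow_succ, mul_comm (8 ^ _) 8, ← mul_assoc]
  gcongr
  omega

lemma aux_F01 (s K i : ℕ) (hi : i ≤ K) (c : Fin s → ℕ) (y) :
    auxF s K i c y = 0 ∨ auxF s K i c y = 1 := by
  cases i with
  | zero => simp only [auxF, auxInd]; split_ifs <;> simp
  | succ i =>
    simp only [auxF, auxInd]
    by_cases h : ∀ j, (y j : ℕ) < c j / 8 * 8 ^ (K - i)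
    · have h' : ∀ j, (y j : ℕ) < c j * 8 ^ (K - (i+1)) := fun j =>
        (h j).trans_le (aux_step_le K i (c j) hi)
      rw [if_pos h, if_pos h']; simp
    · rw [if_neg h]; split_ifs <;> simp

lemma aux_avg_ind (s K i : ℕ) (hs : 1 ≤ s) (hi : i ≤ K) (c : Fin s → ℕ) (hc : ∀ j, c j ≤ s * 8 ^ i) :
    auxAvg (auxInd s K i c) = ∏ j, ((c j : ℝ) / (s * 8 ^ i)) := by
  have hb : ∀ j, c j * 8 ^ (K - i) ≤ s * 8 ^ K := by
    intro j
    calc _ ≤ s * 8 ^ i * 8 ^ (K - i) := by gcongr; exact hc j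
      _ = _ := by rw [mul_assoc, ← pow_add]; congr 2; omega
  have hsum : ∑ y, auxInd s K i c y = ∏ j, ((c j * 8 ^ (K - i) : ℕ) : ℝ) := by
    simp only [auxInd]
    rw [sum_boole, ← Nat.cast_prod]
    congr 1
    have : (univ.filter fun y : Fin s → Fin (s * 8 ^ K) => ∀ j, (y j : ℕ) < c j * 8 ^ (K - i)) =
        Fintype.piFinset (fun j => univ.filter fun v : Fin (s * 8 ^ K) => (v : ℕ) < c j * 8 ^ (K - i)) := by
      ext y; simp [Fintype.mem_piFinset]
    rw [this, Fintype.card_piFinset]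
    refine prod_congr rfl fun j _ => ?_
    rw [Fin.card_filter_val_lt]
    exact min_eq_right (hb j)
  rw [auxAvg, hsum]
  simp only [Fintype.card_pi, Fintype.card_fin]
  rw [Nat.cast_prod, ← prod_div_distrib]
  refine prod_congr rfl fun j _ => ?_
  have e : (8:ℝ) ^ K = 8 ^ i * 8 ^ (K - i) := by rw [← pow_add]; congr 1; omega
  have : (0:ℝ) < s := by exact_mod_cast hs
  push_cast
  rw [e]
  field_simp

lemma aux_avg_sub {α : Type*} [Fintype α] (f g : α → ℝ) :
    auxAvg (fun y => f y - g y) = auxAvg f - auxAvg g := by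
  simp only [auxAvg, sum_sub_distrib, sub_div]

lemma aux_avg_F (s K i : ℕ) (hs : 1 ≤ s) (hi : i ≤ K) (c : Fin s → ℕ) (u : Finset (Fin s))
    (hc : ∀ j, c j ≤ s * 8 ^ i) (hu : ∀ j ∉ u, c j = s * 8 ^ i) :
    auxAvg (auxF s K i c) ≤ 8 * (1 / 8) ^ i := by
  have hs0 : (0:ℝ) < s := by exact_mod_cast hs
  cases i with
  | zero =>
    simp only [auxF]
    rw [aux_avg_ind s K 0 hs hi c hc]
    have : ∏ j, ((c j : ℝ) / (s * 8 ^ 0)) ≤ 1 := by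
      refine prod_le_one (fun j _ => by positivity) (fun j _ => ?_)
      rw [div_le_one (by positivity)]
      exact_mod_cast hc j
    simp only [pow_zero]; simp only [pow_zero] at this; linarith
  | succ i =>
    simp only [auxF]
    have hc' : ∀ j, c j / 8 ≤ s * 8 ^ i := by
      intro j
      apply Nat.div_le_of_le_mul
      calc c j ≤ _ := hc j
        _ = _ := by ring
    rw [aux_avg_sub, aux_avg_ind s K (i+1) hs hi c hc, aux_avg_ind s K i hs (by omega) _ hc']
    have hdiv1 : ∀ j, (((c j / 8 : ℕ) : ℝ)) * 8 ≤ c j := by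
      intro j; exact_mod_cast Nat.div_mul_le_self (c j) 8
    have hdiv2 : ∀ j, (c j : ℝ) ≤ ((c j / 8 : ℕ) : ℝ) * 8 + 8 := by
      intro j
      have : c j ≤ c j / 8 * 8 + 8 := by omega
      exact_mod_cast this
    have e1 : ∀ j, (((c j / 8 : ℕ) : ℝ)) / (s * 8 ^ i) = ((c j / 8 : ℕ) : ℝ) * 8 / (s * 8 ^ (i+1)) := by
      intro j; rw [pow_succ]; field_simp
    have key := aux_prod_sub univ (fun j => (c j : ℝ) / (s * 8 ^ (i+1)))
      (fun j => (((c j / 8 : ℕ) : ℝ)) / (s * 8 ^ i)) (fun j => by positivity)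
      (fun j => by
        simp only [e1]
        have := hdiv1 j
        gcongr)
      (fun j => by
        rw [div_le_one (by positivity)]
        exact_mod_cast hc j)
    refine key.trans ?_
    have : ∀ j ∈ (univ : Finset (Fin s)), (c j : ℝ) / (s * 8 ^ (i+1)) - (((c j / 8 : ℕ) : ℝ)) / (s * 8 ^ i)
        ≤ 8 / (s * 8 ^ (i+1)) := by
      intro j _
      rw [e1, ← sub_div]
      gcongr
      linarith [hdiv2 j]
    refine (sum_le_sum this).trans ?_
    simp only [sum_const, card_univ, Fintype.card_fin, nsmul_eq_mul]
    rw [one_div, inv_pow]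
    apply le_of_eq
    field_simp

lemma aux_chain (s K N : ℕ) (x : Fin N → Fin s → Fin (s * 8 ^ K)) (a : Fin s → ℕ) (τ : ℕ → ℝ)
    (h : ∀ i ≤ K, |∑ n, auxF s K i (fun j => a j / 8 ^ (K - i)) (x n) -
      N * auxAvg (auxF s K i (fun j => a j / 8 ^ (K - i)))| ≤ τ i) (m : ℕ) (hm : m ≤ K) :
    |∑ n, auxInd s K m (fun j => a j / 8 ^ (K - m)) (x n) -
      N * auxAvg (auxInd s K m (fun j => a j / 8 ^ (K - m)))| ≤ ∑ i ∈ range (m+1), τ i := by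
  induction m with
  | zero => simpa [auxF] using h 0 hm
  | succ m ih =>
    rw [sum_range_succ]
    have h1 := ih (by omega)
    have h2 := h (m+1) hm
    have e : (fun j => a j / 8 ^ (K - (m+1)) / 8) = fun j => a j / 8 ^ (K - m) := by
      funext j
      rw [Nat.div_div_eq_div_mul, ← pow_succ]
      congr 2; omega
    simp only [auxF, aux_avg_sub, sum_sub_distrib] at h2
    rw [e] at h2
    rw [abs_le] at *
    constructor <;> linarith [h1.1, h1.2, h2.1, h2.2]

/-- index boxes at level `i` for the coordinates `u` -/
def auxP (s : ℕ) (u : Finset (Fin s)) (i : ℕ) : Finset (Fin s → ℕ) :=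
  Fintype.piFinset (fun j => if j ∈ u then range (s * 8 ^ i + 1) else {s * 8 ^ i})

lemma aux_card_P (s : ℕ) (u : Finset (Fin s)) (i : ℕ) :
    (auxP s u i).card = (s * 8 ^ i + 1) ^ u.card := by
  rw [auxP, Fintype.card_piFinset]
  have : ∀ j : Fin s, (if j ∈ u then range (s * 8 ^ i + 1) else {s * 8 ^ i}).card =
      if j ∈ u then s * 8 ^ i + 1 else 1 := by
    intro j; split_ifs <;> simp
  simp_rw [this]
  rw [prod_ite_mem]; simp

lemma aux_mem_P (s : ℕ) (u : Finset (Fin s)) (i : ℕ) (c : Fin s → ℕ) :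
    c ∈ auxP s u i ↔ (∀ j, c j ≤ s * 8 ^ i) ∧ ∀ j ∉ u, c j = s * 8 ^ i := by
  rw [auxP, Fintype.mem_piFinset]
  constructor
  · intro h
    constructor
    · intro j
      have := h j
      split_ifs at this with hj
      · simp at this; omega
      · simp at this; omega
    · intro j hj
      have := h j
      rw [if_neg hj] at this
      simpa using this
  · rintro ⟨h1, h2⟩ j
    split_ifs with hj
    · have := h1 j; simp; omega
    · simpa using h2 j hj

lemma aux_count (s d i : ℕ) (hs : 2 ≤ s) (hd : 1 ≤ d) :
    ((s * 8 ^ i + 1 : ℕ) : ℝ) ^ d * (2 * Real.exp (-(10 * d * Real.log s * 2 ^ i))) ≤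
      (1 / (s:ℝ)) ^ d * ((1 / 64) * (1 / 2) ^ i) := by
  have hs0 : (0:ℝ) < s := by positivity
  have hs2 : (2:ℝ) ≤ s := by exact_mod_cast hs
  have hs1 : (1:ℝ) ≤ s := by linarith
  have hi : i + 1 ≤ 2 ^ i := Nat.lt_two_pow_self
  have e : Real.exp (-(10 * d * Real.log s * 2 ^ i)) = ((s:ℝ) ^ (10 * d * 2 ^ i))⁻¹ := by
    rw [Real.exp_neg, ← Real.exp_log hs0, ← Real.exp_nat_mul, Real.exp_log hs0]
    push_cast; ring_nf
  have h1 : ((s * 8 ^ i + 1 : ℕ) : ℝ) ≤ (s:ℝ) ^ (2 + 3 * i) := by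
    have : s * 8 ^ i + 1 ≤ s ^ (2 + 3 * i) := by
      calc s * 8 ^ i + 1 ≤ s * (2 * 8 ^ i) := by
            have : 1 ≤ s * 8 ^ i := Nat.mul_pos (by omega) (by positivity)
            nlinarith
        _ = s * (2 * 2 ^ (3 * i)) := by rw [pow_mul]; norm_num
        _ ≤ s * (s * s ^ (3 * i)) := by gcongr
        _ = _ := by ring
    exact_mod_cast this
  have h2 : ((s:ℝ) ^ (10 * d * 2 ^ i))⁻¹ ≤ ((s:ℝ) ^ (d * (2 + 3 * i) + d + (7 + i)))⁻¹ := by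
    refine inv_anti₀ (by positivity) (pow_le_pow_right₀ hs1 ?_)
    have hd2 : d * (i + 1) ≤ d * 2 ^ i := Nat.mul_le_mul_left d hi
    nlinarith
  have h3 : (2:ℝ) ^ (7 + i) ≤ (s:ℝ) ^ (7 + i) := by gcongr
  rw [e]
  calc _ ≤ ((s:ℝ) ^ (2 + 3 * i)) ^ d * (2 * ((s:ℝ) ^ (d * (2 + 3 * i) + d + (7 + i)))⁻¹) := by gcongr
    _ = (1 / (s:ℝ)) ^ d * (2 * ((s:ℝ) ^ (7 + i))⁻¹) := by
        rw [pow_add _ (d * (2 + 3 * i) + d), pow_add _ (d * (2 + 3 * i)), ← pow_mul, mul_comm (2 + 3 * i) d, one_div, inv_pow]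
        field_simp
    _ ≤ (1 / (s:ℝ)) ^ d * (2 * ((2:ℝ) ^ (7 + i))⁻¹) := by gcongr
    _ = _ := by
        rw [pow_add, one_div_pow (2:ℝ) i, mul_inv]
        ring

lemma aux_sum_u (s : ℕ) (hs : 2 ≤ s) : ∑ u : Finset (Fin s), (1 / (s:ℝ)) ^ u.card ≤ 3 := by
  have hs0 : (0:ℝ) < s := by positivity
  have h := Fintype.sum_pow_mul_eq_add_pow (Fin s) (1 / (s:ℝ)) 1
  simp only [one_pow, mul_one, Fintype.card_fin] at h
  rw [h]
  calc (1 / (s:ℝ) + 1) ^ s ≤ (Real.exp (1 / s)) ^ s := by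
        gcongr; exact Real.add_one_le_exp _
    _ = Real.exp 1 := by rw [← Real.exp_nat_mul]; congr 1; field_simp
    _ ≤ 3 := by linarith [Real.exp_one_lt_d9]

lemma aux_geom (m : ℕ) : ∑ i ∈ range m, (1 / 2 : ℝ) ^ i ≤ 2 := by
  have := geom_sum_eq (show (1/2:ℝ) ≠ 1 by norm_num) m
  rw [this]
  have : (0:ℝ) ≤ (1/2) ^ m := by positivity
  rw [div_le_iff_of_neg (by norm_num)]
  linarith

lemma aux_select (N s K : ℕ) (hN : 1 ≤ N) (hs : 2 ≤ s)
    (hK : ∀ d i : ℕ, d ≤ s → i ≤ K → 10 * d * Real.log s ≤ N → 10 * d * Real.log s * 16 ^ i ≤ N) :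
    ∃ x : Fin N → Fin s → Fin (s * 8 ^ K), ∀ u : Finset (Fin s), u.Nonempty →
      10 * u.card * Real.log s ≤ N → ∀ i ≤ K, ∀ c : Fin s → ℕ, (∀ j, c j ≤ s * 8 ^ i) →
      (∀ j ∉ u, c j = s * 8 ^ i) →
      |∑ n, auxF s K i c (x n) - N * auxAvg (auxF s K i c)| ≤
        N * (9 * Real.sqrt (10 * u.card * Real.log s / N) * (1 / 2) ^ i) := by
  classical
  have hN0 : (0:ℝ) < N := by exact_mod_cast hN
  have hlog : 0 < Real.log s := Real.log_pos (by exact_mod_cast hs)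
  have : Nonempty (Fin (s * 8 ^ K)) := ⟨⟨0, by positivity⟩⟩
  let U : Finset (Finset (Fin s)) := univ.filter fun u => u.Nonempty ∧ 10 * u.card * Real.log s ≤ N
  let η : Finset (Fin s) → ℝ := fun u => Real.sqrt (10 * u.card * Real.log s / N)
  let T : Finset (Σ _ : Finset (Fin s) × ℕ, Fin s → ℕ) :=
    (U ×ˢ range (K+1)).sigma fun p => auxP s p.1 p.2
  have hT : ∀ k ∈ T, (k.1.1.Nonempty ∧ 10 * k.1.1.card * Real.log s ≤ N) ∧ k.1.2 ≤ K ∧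
      (∀ j, k.2 j ≤ s * 8 ^ k.1.2) ∧ ∀ j ∉ k.1.1, k.2 j = s * 8 ^ k.1.2 := by
    intro k hk
    simp only [T, U, mem_sigma, mem_product, mem_filter, mem_univ, true_and, mem_range] at hk
    exact ⟨hk.1.1, by omega, (aux_mem_P _ _ _ _).1 hk.2⟩
  have hη : ∀ u, η u ^ 2 = 10 * u.card * Real.log s / N := fun u =>
    Real.sq_sqrt (by positivity)
  obtain ⟨x, hx⟩ := aux_exists N T (fun k => auxF s K k.1.2 k.2) (fun k => 8 * (1/8) ^ k.1.2)
    (fun k => η k.1.1 * 4 ^ k.1.2) (fun k => N * (9 * η k.1.1 * (1/2) ^ k.1.2))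
    (fun k hk a => aux_F01 s K _ (hT k hk).2.1 _ _)
    (fun k hk => aux_avg_F s K _ (by omega) (hT k hk).2.1 _ k.1.1 (hT k hk).2.2.1 (hT k hk).2.2.2)
    (fun k hk => by
      have : 0 < k.1.1.card := (hT k hk).1.1.card_pos
      have : 0 < η k.1.1 := Real.sqrt_pos.2 (by positivity)
      positivity)
    (fun k hk => by
      have h1 := hK k.1.1.card k.1.2 (by simpa using card_le_univ k.1.1) (hT k hk).2.1 (hT k hk).1.2
      have h2 : (η k.1.1 * 4 ^ k.1.2) ^ 2 ≤ 1 := by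
        rw [mul_pow, hη, ← pow_mul, mul_comm k.1.2 2, pow_mul, div_mul_eq_mul_div, div_le_one hN0]
        norm_num
        exact h1
      exact (sq_le_one_iff₀ (by positivity)).1 h2)
    (by
      have hexp : ∀ k : (Σ _ : Finset (Fin s) × ℕ, Fin s → ℕ),
          (N:ℝ) * (8 * (1/8) ^ k.1.2) * (η k.1.1 * 4 ^ k.1.2) ^ 2 -
          η k.1.1 * 4 ^ k.1.2 * (N * (9 * η k.1.1 * (1/2) ^ k.1.2)) =
          -(10 * k.1.1.card * Real.log s * 2 ^ k.1.2) := by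
        intro k
        have e1 : (1/8:ℝ) ^ k.1.2 * (4 ^ k.1.2) ^ 2 = 2 ^ k.1.2 := by
          rw [← pow_mul, mul_comm k.1.2 2, pow_mul, ← mul_pow]; norm_num
        have e2 : (4:ℝ) ^ k.1.2 * (1/2) ^ k.1.2 = 2 ^ k.1.2 := by
          rw [← mul_pow]; norm_num
        have e3 : N * η k.1.1 ^ 2 = 10 * k.1.1.card * Real.log s := by
          rw [hη]; field_simp
        calc _ = 8 * (N * η k.1.1 ^ 2) * ((1/8:ℝ) ^ k.1.2 * (4 ^ k.1.2) ^ 2) -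
              9 * (N * η k.1.1 ^ 2) * ((4:ℝ) ^ k.1.2 * (1/2) ^ k.1.2) := by ring
          _ = _ := by rw [e1, e2, e3]; ring
      simp_rw [hexp]
      simp only [T]
      rw [sum_sigma]
      simp only [sum_const, nsmul_eq_mul, aux_card_P]
      calc _ ≤ ∑ p ∈ U ×ˢ range (K+1), (1 / (s:ℝ)) ^ p.1.card * ((1 / 64) * (1 / 2) ^ p.2) := by
            refine sum_le_sum fun p hp => ?_
            have hp1 : p.1.Nonempty := by
              simp only [U, mem_product, mem_filter] at hp
              exact hp.1.2.1
            have := aux_count s p.1.card p.2 hs hp1.card_pos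
            rw [Nat.cast_pow]; exact this
        _ = (∑ u ∈ U, (1 / (s:ℝ)) ^ u.card) * ∑ i ∈ range (K+1), ((1 / 64) * (1 / 2 : ℝ) ^ i) := by
            rw [sum_mul_sum, sum_product]
        _ ≤ 3 * ((1 / 64) * 2) := by
            rw [← mul_sum]
            have h1 : ∑ u ∈ U, (1 / (s:ℝ)) ^ u.card ≤ 3 :=
              (sum_le_sum_of_subset_of_nonneg (filter_subset _ _)
                (fun _ _ _ => by positivity)).trans (aux_sum_u s hs)
            have h2 := aux_geom (K+1)
            gcongr
        _ < 1 := by norm_num)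
  refine ⟨x, fun u hu1 hu2 i hi c hc1 hc2 => ?_⟩
  refine hx ⟨(u, i), c⟩ ?_
  simp only [T, U, mem_sigma, mem_product, mem_filter, mem_univ, true_and, mem_range]
  exact ⟨⟨⟨hu1, hu2⟩, by omega⟩, (aux_mem_P _ _ _ _).2 ⟨hc1, hc2⟩⟩

lemma aux_K (N s : ℕ) (hs : 2 ≤ s) :
    ∃ K : ℕ, (N:ℝ) < 10 * s * Real.log s * 16 ^ (K+1) ∧
      ∀ d i : ℕ, d ≤ s → i ≤ K → 10 * d * Real.log s ≤ N → 10 * d * Real.log s * 16 ^ i ≤ N := by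
  classical
  have hlog : 0 < Real.log s := Real.log_pos (by exact_mod_cast hs)
  have hpos : 0 < 10 * s * Real.log s := by positivity
  have hex : ∃ K : ℕ, (N:ℝ) < 10 * s * Real.log s * 16 ^ (K+1) := by
    obtain ⟨n, hn⟩ := pow_unbounded_of_one_lt ((N:ℝ) / (10 * s * Real.log s)) (show (1:ℝ) < 16 by norm_num)
    refine ⟨n, ?_⟩
    rw [div_lt_iff₀ hpos] at hn
    have : (16:ℝ) ^ n ≤ 16 ^ (n+1) := by gcongr <;> norm_num
    nlinarith
  refine ⟨Nat.find hex, Nat.find_spec hex, fun d i hd hi h => ?_⟩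
  by_cases h0 : i = 0
  · subst h0; simpa using h
  have hlt := Nat.find_min hex (m := i - 1) (by omega)
  have hi1 : i - 1 + 1 = i := by omega
  rw [hi1, not_lt] at hlt
  refine le_trans ?_ hlt
  have : (d:ℝ) ≤ s := by exact_mod_cast hd
  gcongr

lemma aux_disc_le_one {N s : ℕ} (x : Fin N → Fin s → ℝ) (t : Fin s → ℝ)
    (ht : ∀ j, t j ∈ Set.Icc (0:ℝ) 1) : |localDisc x t| ≤ 1 := by
  have h1 : 0 ≤ ∏ j, t j := prod_nonneg fun j _ => (ht j).1
  have h2 : ∏ j, t j ≤ 1 := prod_le_one (fun j _ => (ht j).1) fun j _ => (ht j).2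
  have h3 : ((univ.filter fun n => ∀ j, x n j < t j).card : ℝ) / N ≤ 1 := by
    apply div_le_one_of_le₀ _ (by positivity)
    have := card_filter_le (univ : Finset (Fin N)) (fun n => ∀ j, x n j < t j)
    simp only [card_univ, Fintype.card_fin] at this
    exact_mod_cast this
  have h4 : 0 ≤ ((univ.filter fun n => ∀ j, x n j < t j).card : ℝ) / N := by positivity
  rw [localDisc, abs_le]
  constructor <;> linarith

lemma aux_main (N s : ℕ) (hN : 1 ≤ N) (hs : 2 ≤ s) :
    ∃ x : Fin N → Fin s → ℝ, (∀ n j, x n j ∈ Set.Ico (0:ℝ) 1) ∧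
      ∀ u : Finset (Fin s), u.Nonempty → ∀ z : Fin s → ℝ, (∀ j, z j ∈ Set.Icc (0:ℝ) 1) →
        |localDisc x (projPoint u z)| ≤ 22 * Real.sqrt (10 * u.card * Real.log s / N) := by
  classical
  have hN0 : (0:ℝ) < N := by exact_mod_cast hN
  have hs0 : (0:ℝ) < s := by positivity
  have hlog : 0 < Real.log s := Real.log_pos (by exact_mod_cast hs)
  obtain ⟨K, hK1, hK2⟩ := aux_K N s hs
  obtain ⟨y, hy⟩ := aux_select N s K hN hs hK2
  have hM : (0:ℝ) < s * 8 ^ K := by positivity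
  refine ⟨fun n j => ((y n j : ℕ) : ℝ) / (s * 8 ^ K), fun n j => ⟨by positivity, ?_⟩, ?_⟩
  · rw [div_lt_one hM]; exact_mod_cast (y n j).2
  intro u hu z hz
  set η := Real.sqrt (10 * u.card * Real.log s / N) with hη
  have hη0 : 0 ≤ η := Real.sqrt_nonneg _
  have hηsq : η ^ 2 = 10 * u.card * Real.log s / N := Real.sq_sqrt (by positivity)
  have ht : ∀ j, projPoint u z j ∈ Set.Icc (0:ℝ) 1 := by
    intro j; unfold projPoint; split_ifs
    · exact hz j
    · simp
  have htu : ∀ j ∉ u, projPoint u z j = 1 := by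
    intro j hj; simp [projPoint, hj]
  generalize projPoint u z = t at ht htu
  by_cases hbig : 10 * u.card * Real.log s ≤ N
  swap
  · have h1 : 1 ≤ η := by
      rw [hη]; apply Real.one_le_sqrt.2
      rw [le_div_iff₀ hN0]; linarith
    linarith [aux_disc_le_one (fun n j => ((y n j : ℕ) : ℝ) / (s * 8 ^ K)) t ht]
  let a : Fin s → ℕ := fun j => ⌈t j * (s * 8 ^ K)⌉₊
  have ha1 : ∀ j, a j ≤ s * 8 ^ K := by
    intro j
    apply Nat.ceil_le.2
    push_cast
    have := (ht j).2
    nlinarith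
  have ha2 : ∀ j ∉ u, a j = s * 8 ^ K := by
    intro j hj
    simp only [a, htu j hj, one_mul]
    have : (s * 8 ^ K : ℝ) = ((s * 8 ^ K : ℕ) : ℝ) := by push_cast; rfl
    rw [this, Nat.ceil_natCast]
  have hsplit : ∀ i ≤ K, s * 8 ^ K = s * 8 ^ i * 8 ^ (K - i) := by
    intro i hi
    rw [mul_assoc, ← pow_add]; congr 2; omega
  have hchain := aux_chain s K N y a (fun i => N * (9 * η * (1 / 2) ^ i)) (fun i hi => by
    refine hy u hu hbig i hi _ (fun j => ?_) (fun j hj => ?_)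
    · apply Nat.div_le_of_le_mul
      rw [mul_comm, ← hsplit i hi]; exact ha1 j
    · rw [ha2 j hj, hsplit i hi]
      exact Nat.mul_div_cancel _ (by positivity)) K le_rfl
  simp only [Nat.sub_self, pow_zero, Nat.div_one] at hchain
  have heq : (fun j => a j) = a := rfl
  rw [heq, aux_avg_ind s K K (by omega) le_rfl a ha1, ← mul_sum, ← mul_sum] at hchain
  have hcount : ∑ n, auxInd s K K a (y n) =
      ((univ.filter fun n => ∀ j, ((y n j : ℕ) : ℝ) / (s * 8 ^ K) < t j).card : ℝ) := by
    simp only [auxInd, Nat.sub_self, pow_zero, mul_one]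
    rw [sum_boole]
    congr 2
    ext n
    simp only [mem_filter, mem_univ, true_and]
    refine forall_congr' fun j => ?_
    rw [div_lt_iff₀ hM]
    exact Nat.lt_ceil
  rw [hcount] at hchain
  have hround1 := aux_prod_sub univ (fun j => (a j : ℝ) / (s * 8 ^ K)) t (fun j => (ht j).1)
    (fun j => by rw [le_div_iff₀ hM]; exact Nat.le_ceil _)
    (fun j => by rw [div_le_one hM]; exact_mod_cast ha1 j)
  have hround2 : ∏ j, t j ≤ ∏ j, ((a j : ℝ) / (s * 8 ^ K)) :=
    prod_le_prod (fun j _ => (ht j).1) (fun j _ => by rw [le_div_iff₀ hM]; exact Nat.le_ceil _)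
  have hround3 : ∑ j, ((a j : ℝ) / (s * 8 ^ K) - t j) ≤ u.card / (s * 8 ^ K) := by
    rw [← sum_subset (subset_univ u)]
    · calc _ ≤ ∑ j ∈ u, 1 / (s * 8 ^ K : ℝ) := by
            refine sum_le_sum fun j _ => ?_
            rw [sub_le_iff_le_add, div_le_iff₀ hM, add_mul, div_mul_cancel₀ _ hM.ne']
            have := Nat.ceil_lt_add_one (mul_nonneg (ht j).1 hM.le)
            linarith
        _ = _ := by simp [div_eq_mul_inv]
    · intro j _ hj
      rw [ha2 j hj, htu j hj]
      push_cast
      rw [div_self hM.ne', sub_self]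
  have hround4 : (u.card : ℝ) / (s * 8 ^ K) ≤ 4 * η := by
    have hcard : (u.card : ℝ) ≤ s := by
      have := card_le_univ u
      simp only [Fintype.card_fin] at this
      exact_mod_cast this
    have h48 : (4:ℝ) ^ K ≤ 8 ^ K := by gcongr; norm_num
    refine (div_le_div_of_nonneg_left (by positivity) (by positivity)
      (mul_le_mul_of_nonneg_left h48 hs0.le)).trans ?_
    refine abs_le_of_sq_le_sq' ?_ (by positivity) |>.2
    rw [mul_pow, hηsq, div_pow, mul_pow, ← pow_mul, mul_comm K 2, pow_mul]
    rw [pow_succ] at hK1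
    norm_num only
    rw [← mul_div_assoc, div_le_div_iff₀ (by positivity) hN0]
    have h1 : (u.card:ℝ) ^ 2 * N ≤ u.card ^ 2 * (10 * s * Real.log s * (16 ^ K * 16)) := by
      gcongr
    refine h1.trans ?_
    have h2 : (u.card:ℝ) * (u.card * (10 * s * Real.log s * (16 ^ K * 16))) ≤
      s * (u.card * (10 * s * Real.log s * (16 ^ K * 16))) := by gcongr
    nlinarith
  have hg := aux_geom (K+1)
  have hmain : |((univ.filter fun n => ∀ j, ((y n j : ℕ) : ℝ) / (s * 8 ^ K) < t j).card : ℝ) / N -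
      ∏ j, ((a j : ℝ) / (s * 8 ^ K))| ≤ 18 * η := by
    have h18 : (N:ℝ) * (9 * η * ∑ i ∈ range (K+1), (1 / 2 : ℝ) ^ i) ≤ N * (18 * η) := by
      have := mul_le_mul_of_nonneg_left hg (show 0 ≤ 9 * η by positivity)
      refine mul_le_mul_of_nonneg_left ?_ hN0.le
      linarith
    have h := hchain.trans h18
    have e : ((univ.filter fun n => ∀ j, ((y n j : ℕ) : ℝ) / (s * 8 ^ K) < t j).card : ℝ) / N -
      ∏ j, ((a j : ℝ) / (s * 8 ^ K)) =
      (((univ.filter fun n => ∀ j, ((y n j : ℕ) : ℝ) / (s * 8 ^ K) < t j).card : ℝ) -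
        N * ∏ j, ((a j : ℝ) / (s * 8 ^ K))) / N := by field_simp
    rw [e, abs_div, abs_of_pos hN0, div_le_iff₀ hN0]
    linarith
  rw [localDisc]
  rw [abs_le] at hmain ⊢
  constructor <;> linarith [hmain.1, hmain.2]

/-- for any nonnegative weights `γ` there is `C > 0` (independent of `N`
and `s`) with `disc_γ(N,s) ≤ C (√(log s)/√N) max_{∅ ≠ u ⊆ [s]} γ_u √|u|`. -/
theorem wMinDisc_le (γ : ℕ → ℝ) (hγ : ∀ j, 1 ≤ j → 0 ≤ γ j) :
    ∃ C : ℝ, 0 < C ∧ ∀ N s : ℕ, 1 ≤ N → 2 ≤ s →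
      wMinDisc γ N s ≤ C * (Real.sqrt (Real.log s) / Real.sqrt N) *
        sSup {d : ℝ | ∃ u : Finset (Fin s), u.Nonempty ∧
          d = weightOf γ u * Real.sqrt u.card} := by
  refine ⟨22 * Real.sqrt 10, by positivity, fun N s hN hs => ?_⟩
  have hw : ∀ u : Finset (Fin s), 0 ≤ weightOf γ u := fun u =>
    prod_nonneg fun j _ => hγ _ (by omega)
  obtain ⟨x, hx1, hx2⟩ := aux_main N s hN hs
  have hbdd : BddAbove {d : ℝ | ∃ u : Finset (Fin s), u.Nonempty ∧
      d = weightOf γ u * Real.sqrt u.card} := by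
    apply Set.Finite.bddAbove
    refine (Set.finite_range fun u : Finset (Fin s) => weightOf γ u * Real.sqrt u.card).subset ?_
    rintro d ⟨u, -, rfl⟩
    exact ⟨u, rfl⟩
  have hnn : 0 ≤ sSup {d : ℝ | ∃ u : Finset (Fin s), u.Nonempty ∧
      d = weightOf γ u * Real.sqrt u.card} := by
    apply Real.sSup_nonneg
    rintro d ⟨u, -, rfl⟩
    exact mul_nonneg (hw u) (Real.sqrt_nonneg _)
  calc wMinDisc γ N s ≤ wStarDisc γ x := by
        refine csInf_le ⟨0, ?_⟩ ⟨x, hx1, rfl⟩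
        rintro d ⟨x', -, rfl⟩
        apply Real.sSup_nonneg
        rintro d ⟨z, -, u, -, rfl⟩
        exact mul_nonneg (hw u) (abs_nonneg _)
    _ ≤ _ := by
        refine Real.sSup_le ?_ (by positivity)
        rintro d ⟨z, hz, u, hu, rfl⟩
        calc _ ≤ weightOf γ u * (22 * Real.sqrt (10 * u.card * Real.log s / N)) :=
              mul_le_mul_of_nonneg_left (hx2 u hu z hz) (hw u)
          _ = 22 * Real.sqrt 10 * (Real.sqrt (Real.log s) / Real.sqrt N) *
              (weightOf γ u * Real.sqrt u.card) := by
              rw [Real.sqrt_div' _ (by positivity), Real.sqrt_mul (by positivity),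
                Real.sqrt_mul (by positivity)]
              ring
          _ ≤ _ := by
              refine mul_le_mul_of_nonneg_left (le_csSup hbdd ⟨u, hu, rfl⟩) (by positivity)
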